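/- Let Γ ≤ Δ be countable discrete groups with [Δ : Γ] = ∞, let θ be an invariant random subgroup of Γ, and let T ⊆ Δ be a transversal for the left cosets Δ/Γ. Then CIND_Γ^Δ(θ) is non-atomic if and only if there exists γ ∈ core_Δ(Γ) \ core_Δ(ker(θ)) such that ∑_{t∈T} (1 − θ(N_{t⁻¹γt}^Γ)) < ∞ and θ(N_{t⁻¹γt}^Γ) > 0 for all t ∈ T. -/

import Mathlib

open MeasureTheory

namespace IRSPaper


/-! ## Basic setup: the space of subgroups, invariant random subgroups -/

/-- The conjugation action of a group on its space of subgroups: `g • H = gHg⁻¹`. -/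
def conjSub {G : Type*} [Group G] (g : G) (H : Subgroup G) : Subgroup G :=
  Subgroup.map ((MulAut.conj g).toMonoidHom) H

/-- The topology on the space of subgroups of `G`, induced from the product topology
on `G → Bool` (i.e. the topology of `2^G`). -/
noncomputable instance instTopSub (G : Type*) [Group G] : TopologicalSpace (Subgroup G) :=
  TopologicalSpace.induced
    (fun (H : Subgroup G) (g : G) => @decide (g ∈ H) (Classical.dec _)) inferInstance

/-- The Borel σ-algebra on the space of subgroups. -/
noncomputable instance instMeasSub (G : Type*) [Group G] : MeasurableSpace (Subgroup G) :=
  borel _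

instance instBorelSub (G : Type*) [Group G] : BorelSpace (Subgroup G) := ⟨rfl⟩

/-- An invariant random subgroup: a Borel probability measure on `Sub(G)` which is invariant
under the conjugation action of `G`. -/
def IsIRS {G : Type*} [Group G] (θ : Measure (Subgroup G)) : Prop :=
  IsProbabilityMeasure θ ∧ ∀ g : G, Measure.map (conjSub g) θ = θ

/-- The basic set `N_F = {H ∈ Sub(G) : F ⊆ H}`. -/
def NSet {G : Type*} [Group G] (F : Set G) : Set (Subgroup G) :=
  {H : Subgroup G | F ⊆ (H : Set G)}

/-- For `Γ ≤ Δ` and `S ⊆ Δ`, the set of subgroups of `Γ` containing every element of `Γ`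
whose image in `Δ` lies in `S`.  When `S = t⁻¹Ft ⊆ Γ`, this is exactly the basic set
`N_{t⁻¹Ft}^Γ ⊆ Sub(Γ)`. -/
def NpullSet {Δ : Type*} [Group Δ] (Γ : Subgroup Δ) (S : Set Δ) : Set (Subgroup ↥Γ) :=
  {Λ : Subgroup ↥Γ | ∀ x : ↥Γ, (x : Δ) ∈ S → x ∈ Λ}

/-- `T` is a transversal for the left cosets `Δ/Γ`: each left coset `dΓ` contains exactly
one element of `T`. -/
def IsLeftTransversal {Δ : Type*} [Group Δ] (Γ : Subgroup Δ) (T : Set Δ) : Prop :=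
  ∀ d : Δ, ∃! t : Δ, t ∈ T ∧ d⁻¹ * t ∈ Γ

/-- The defining property of the co-induced invariant random subgroup
`ν = CIND_Γ^Δ(θ)` (with respect to the transversal `T`):  for every finite `F ⊆ Δ`,
`ν(N_F) = 0` if `F ⊄ core_Δ(Γ)` and `ν(N_F) = ∏_{t ∈ T} θ(N_{t⁻¹Ft}^Γ)` if `F ⊆ core_Δ(Γ)`. -/
def CindSpec {Δ : Type*} [Group Δ] (Γ : Subgroup Δ) (T : Set Δ)
    (θ : Measure (Subgroup ↥Γ)) (ν : Measure (Subgroup Δ)) : Prop :=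
  ∀ F : Finset Δ,
    (¬ (F : Set Δ) ⊆ (Γ.normalCore : Set Δ) → ν (NSet (F : Set Δ)) = 0) ∧
    ((F : Set Δ) ⊆ (Γ.normalCore : Set Δ) →
      ν (NSet (F : Set Δ)) =
        ∏' t : T, θ (NpullSet Γ ((fun d => (t : Δ)⁻¹ * d * (t : Δ)) '' (F : Set Δ))))

/-- Ergodicity of a (not necessarily probability-) measure-preserving action given by
an explicit family of maps: every invariant measurable set is null or conull. -/
def ErgodicAct {G α : Type*} [MeasurableSpace α] (act : G → α → α) (μ : Measure α) : Prop :=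
  ∀ s : Set α, MeasurableSet s → (∀ g : G, act g ⁻¹' s = s) → μ s = 0 ∨ μ sᶜ = 0

/-- Weak mixing of an action: the diagonal action on the square is ergodic. -/
def WeaklyMixingAct {G α : Type*} [MeasurableSpace α] (act : G → α → α) (μ : Measure α) : Prop :=
  ErgodicAct (fun (g : G) (p : α × α) => (act g p.1, act g p.2)) (μ.prod μ)

/-- A measure is non-atomic (has no atoms) if every singleton is null. -/
def NonAtomicMeasure {α : Type*} [MeasurableSpace α] (μ : Measure α) : Prop :=
  ∀ x : α, μ {x} = 0

/-- The kernel of an IRS `θ` of `Γ`: the set of `γ ∈ Γ` with `θ(N_γ) = 1`.  (For a probability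
measure this set is a subgroup; taking `Subgroup.closure` makes it a `Subgroup` on the nose.) -/
def kerIRS {Δ : Type*} [Group Δ] (Γ : Subgroup Δ) (θ : Measure (Subgroup ↥Γ)) : Subgroup ↥Γ :=
  Subgroup.closure {x : ↥Γ | θ {Λ : Subgroup ↥Γ | x ∈ Λ} = 1}

/-- `core_Δ(ker(θ))`, viewed as a subgroup of `Δ`. -/
def coreKer {Δ : Type*} [Group Δ] (Γ : Subgroup Δ) (θ : Measure (Subgroup ↥Γ)) : Subgroup Δ :=
  ((kerIRS Γ θ).map Γ.subtype).normalCore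

/-!
Write `ν` for the co-induced IRS. For `γ ∈ core_Δ(Γ)`, `ν(N_γ)` is an infinite product of numbers
in `[0, 1]`, so it is positive exactly when the sum in the theorem converges and all factors are
positive; it remains to show that `ν` is non-atomic if and only if `ν(N_γ) > 0` for some
`γ ∉ core_Δ(ker(θ))`. Conjugating `γ` by `g` translates the family of factors by `g` on `Δ/Γ`, and
since `Δ/Γ` is infinite, B. H. Neumann separation gives infinitely many disjoint translates of
any finite set of cosets.

* Almost every subgroup contains `core_Δ(ker(θ))`, hence so does an atom. An atom has finitely many
  conjugates, so if it contains `γ`, some conjugate of it contains infinitely many conjugates of `γ`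
  whose factors equal to that of `γ` at a given coset sit at different cosets; this forces that
  factor to be `1`. Hence `core_Δ(ker(θ))` is the only possible atom.
* If no `γ ∉ core_Δ(ker(θ))` has `ν(N_γ) > 0`, then `ν` is the Dirac mass at `core_Δ(ker(θ))`. If
  one has, then infinitely many of its conjugates give almost pairwise independent events of equal
  positive measure, so by the second moment method almost every subgroup contains a conjugate of
  `γ`, which the normal subgroup `core_Δ(ker(θ))` does not.
-/

open Filter Function Topology
open scoped ENNReal Pointwise

section InfiniteProduct

theorem one_add_sum_le_prod_one_add {ι R : Type*} [CommSemiring R] [PartialOrder R]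
    [IsOrderedRing R] [CanonicallyOrderedAdd R] (x : ι → R) (s : Finset ι) :
    1 + ∑ i ∈ s, x i ≤ ∏ i ∈ s, (1 + x i) := by
  classical
  induction s using Finset.induction_on with
  | empty => simp
  | insert a s ha ih =>
    rw [Finset.prod_insert ha, Finset.sum_insert ha]
    calc 1 + (x a + ∑ i ∈ s, x i) ≤ 1 + (x a + ∑ i ∈ s, x i) + x a * ∑ i ∈ s, x i := le_self_add
      _ = (1 + x a) * (1 + ∑ i ∈ s, x i) := by ring
      _ ≤ (1 + x a) * ∏ i ∈ s, (1 + x i) := by gcongr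

variable {ι κ : Type*} {f : ι → ℝ≥0∞}

theorem tprod_le_prod_comp_of_injOn (hf : ∀ i, f i ≤ 1) {e : κ → ι} {s : Finset κ}
    (he : Set.InjOn e s) : ∏' i, f i ≤ ∏ k ∈ s, f (e k) := by
  classical
  rw [ENNReal.tprod_eq_iInf_prod hf, ← Finset.prod_image he]
  exact iInf_le _ _

theorem prod_mul_sum_one_sub_le_one (hf : ∀ i, f i ≤ 1) (s : Finset ι) :
    (∏ i ∈ s, f i) * ∑ i ∈ s, (1 - f i) ≤ 1 := by
  have factor_le_one (i : ι) : f i * (1 + (1 - f i)) ≤ 1 := calc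
    f i * (1 + (1 - f i)) = f i + f i * (1 - f i) := by ring
    _ ≤ f i + (1 - f i) := by gcongr; exact mul_le_of_le_one_left' (hf i)
    _ = 1 := add_tsub_cancel_of_le (hf i)
  calc (∏ i ∈ s, f i) * ∑ i ∈ s, (1 - f i)
      ≤ (∏ i ∈ s, f i) * ∏ i ∈ s, (1 + (1 - f i)) := by
        gcongr; exact le_add_self.trans (one_add_sum_le_prod_one_add _ s)
    _ = ∏ i ∈ s, f i * (1 + (1 - f i)) := Finset.prod_mul_distrib.symm
    _ ≤ 1 := Finset.prod_le_one' fun i _ => factor_le_one i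

theorem one_le_prod_add_sum_one_sub (hf : ∀ i, f i ≤ 1) (s : Finset ι) :
    1 ≤ ∏ i ∈ s, f i + ∑ i ∈ s, (1 - f i) := by
  classical
  induction s using Finset.induction_on with
  | empty => simp
  | insert a s ha ih =>
    rw [Finset.prod_insert ha, Finset.sum_insert ha]
    set P := ∏ i ∈ s, f i
    set S := ∑ i ∈ s, (1 - f i)
    have hP : P ≤ 1 := Finset.prod_le_one' fun i _ => hf i
    calc 1 ≤ P + S := ih
      _ = f a * P + (1 - f a) * P + S := by rw [← add_mul, add_tsub_cancel_of_le (hf a), one_mul]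
      _ ≤ f a * P + (1 - f a) + S := by gcongr; exact mul_le_of_le_one_right' hP
      _ = f a * P + (1 - f a + S) := add_assoc _ _ _

theorem exists_finset_forall_disjoint_sum_le {x : ι → ℝ≥0∞} (hx : ∑' i, x i ≠ ⊤) {ε : ℝ≥0∞}
    (hε : 0 < ε) : ∃ K : Finset ι, ∀ s : Finset ι, Disjoint K s → ∑ i ∈ s, x i ≤ ε := by
  obtain ⟨K, hK⟩ := ((ENNReal.tendsto_tsum_compl_atTop_zero hx).eventually_le_const hε).exists
  refine ⟨K, fun s hKs => hK.trans' ?_⟩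
  have hinj : Injective fun i : s => (⟨i, Finset.disjoint_right.1 hKs i.2⟩ : {i // i ∉ K}) :=
    fun i j hij => Subtype.ext (by simpa using hij)
  rw [← Finset.sum_coe_sort, ← tsum_fintype (L := .unconditional _)]
  exact ENNReal.tsum_comp_le_tsum_of_injective hinj fun i => x i

theorem tsum_one_sub_lt_top_of_tprod_pos (hf : ∀ i, f i ≤ 1) (h : 0 < ∏' i, f i) :
    ∑' i, (1 - f i) < ⊤ := by
  refine lt_of_le_of_lt ?_ (ENNReal.inv_lt_top.2 h)
  rw [ENNReal.tsum_eq_iSup_sum]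
  refine iSup_le fun s => ?_
  rw [ENNReal.le_inv_iff_mul_le, mul_comm]
  refine le_trans ?_ (prod_mul_sum_one_sub_le_one hf s)
  gcongr
  exact tprod_le_prod_comp_of_injOn hf injective_id.injOn

theorem tprod_pos_of_tsum_one_sub_lt_top (hf : ∀ i, f i ≤ 1) (hsum : ∑' i, (1 - f i) < ⊤)
    (hpos : ∀ i, 0 < f i) : 0 < ∏' i, f i := by
  classical
  obtain ⟨K, hK⟩ := exists_finset_forall_disjoint_sum_le (ε := 2⁻¹) hsum.ne (by simp)
  have half_le_prod (s : Finset ι) (hs : Disjoint K s) : 2⁻¹ ≤ ∏ i ∈ s, f i := by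
    refine (ENNReal.add_le_add_iff_right (by simp : (2⁻¹ : ℝ≥0∞) ≠ ⊤)).1 ?_
    rw [ENNReal.inv_two_add_inv_two]
    exact (one_le_prod_add_sum_one_sub hf s).trans (by gcongr; exact hK s hs)
  refine lt_of_lt_of_le (b := (∏ i ∈ K, f i) * 2⁻¹) ?_ ?_
  · exact ENNReal.mul_pos (Finset.prod_ne_zero_iff.2 fun i _ => (hpos i).ne') (by simp)
  · rw [ENNReal.tprod_eq_iInf_prod hf]
    refine le_iInf fun s => ?_
    calc (∏ i ∈ K, f i) * 2⁻¹ ≤ (∏ i ∈ K, f i) * ∏ i ∈ s \ K, f i := by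
          gcongr; exact half_le_prod _ Finset.disjoint_sdiff
      _ = ∏ i ∈ K ∪ s, f i := by
          rw [← Finset.prod_union Finset.disjoint_sdiff, Finset.union_sdiff_self_eq_union]
      _ ≤ ∏ i ∈ s, f i := Finset.prod_le_prod_of_subset_of_le_one' Finset.subset_union_right
          fun i _ _ => hf i

theorem tprod_pos_iff_tsum_one_sub_lt_top (hf : ∀ i, f i ≤ 1) :
    0 < ∏' i, f i ↔ ∑' i, (1 - f i) < ⊤ ∧ ∀ i, 0 < f i := by
  refine ⟨fun h => ⟨tsum_one_sub_lt_top_of_tprod_pos hf h, fun i => h.trans_le ?_⟩,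
    fun h => tprod_pos_of_tsum_one_sub_lt_top hf h.1 h.2⟩
  simpa using tprod_le_prod_comp_of_injOn (s := {i}) hf injective_id.injOn

end InfiniteProduct

section SecondMoment

variable {α ι : Type*} [MeasurableSpace α] {μ : Measure α}

theorem sq_lintegral_mul_le {f g : α → ℝ≥0∞} (hf : AEMeasurable f μ) (hg : AEMeasurable g μ) :
    (∫⁻ x, f x * g x ∂μ) ^ 2 ≤ (∫⁻ x, f x ^ 2 ∂μ) * ∫⁻ x, g x ^ 2 ∂μ := by
  have sq_rpow_half (y : ℝ≥0∞) : (y ^ (1 / 2 : ℝ)) ^ 2 = y := by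
    rw [← ENNReal.rpow_mul_natCast]; norm_num
  have holder := ENNReal.lintegral_mul_le_Lp_mul_Lq μ Real.HolderConjugate.two_two hf hg
  calc (∫⁻ x, f x * g x ∂μ) ^ 2
      ≤ ((∫⁻ x, f x ^ (2 : ℝ) ∂μ) ^ (1 / 2 : ℝ) * (∫⁻ x, g x ^ (2 : ℝ) ∂μ) ^ (1 / 2 : ℝ)) ^ 2 :=
        pow_le_pow_left' holder 2
    _ = (∫⁻ x, f x ^ 2 ∂μ) * ∫⁻ x, g x ^ 2 ∂μ := by
        simp only [mul_pow, sq_rpow_half, ENNReal.rpow_ofNat]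

/-- The Chung–Erdős inequality. -/
theorem sq_sum_measure_le_mul_sum_measure_inter {A : ι → Set α} (hA : ∀ i, MeasurableSet (A i))
    {U : Set α} (hU : MeasurableSet U) (hAU : ∀ i, A i ⊆ U) (s : Finset ι) :
    (∑ i ∈ s, μ (A i)) ^ 2 ≤ μ U * ∑ i ∈ s, ∑ j ∈ s, μ (A i ∩ A j) := by
  let count (x : α) : ℝ≥0∞ := ∑ i ∈ s, (A i).indicator 1 x
  have measurable_count : Measurable count :=
    Finset.measurable_fun_sum _ fun i _ => measurable_one.indicator (hA i)
  have count_mul (x : α) : U.indicator 1 x * count x = count x := by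
    by_cases hx : x ∈ U
    · simp [hx]
    · have : ∀ i, x ∉ A i := fun i hi => hx (hAU i hi)
      simp [count, this]
  have count_sq (x : α) : count x ^ 2 = ∑ i ∈ s, ∑ j ∈ s, (A i ∩ A j).indicator 1 x := by
    simp only [count, sq, Finset.sum_mul_sum, Set.inter_indicator_one, Pi.mul_apply]
  calc (∑ i ∈ s, μ (A i)) ^ 2 = (∫⁻ x, U.indicator 1 x * count x ∂μ) ^ 2 := by
        simp only [count_mul, count]
        rw [lintegral_finsetSum _ fun i _ => measurable_one.indicator (hA i)]
        simp only [lintegral_indicator_one (hA _)]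
    _ ≤ (∫⁻ x, U.indicator 1 x ^ 2 ∂μ) * ∫⁻ x, count x ^ 2 ∂μ :=
        sq_lintegral_mul_le (measurable_one.indicator hU).aemeasurable
          measurable_count.aemeasurable
    _ = μ U * ∑ i ∈ s, ∑ j ∈ s, μ (A i ∩ A j) := by
        have indicator_sq (x : α) : U.indicator (1 : α → ℝ≥0∞) x ^ 2 = U.indicator 1 x := by
          by_cases hx : x ∈ U <;> simp [hx]
        simp only [indicator_sq, lintegral_indicator_one hU, count_sq]
        rw [lintegral_finsetSum _ fun i _ => Finset.measurable_fun_sum _ fun j _ =>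
          measurable_one.indicator ((hA i).inter (hA j))]
        congr! 2 with i
        rw [lintegral_finsetSum _ fun j _ => measurable_one.indicator ((hA i).inter (hA j))]
        simp only [lintegral_indicator_one ((hA _).inter (hA _))]

theorem sum_measure_inter_le_of_pairwise_le {A : ι → Set α} {a d : ℝ≥0∞} (ha : ∀ i, μ (A i) = a)
    (hd : Pairwise fun i j => μ (A i ∩ A j) ≤ d) (s : Finset ι) :
    ∑ i ∈ s, ∑ j ∈ s, μ (A i ∩ A j) ≤ s.card * (a + s.card * d) := by
  classical
  have row_le (i : ι) (hi : i ∈ s) : ∑ j ∈ s, μ (A i ∩ A j) ≤ a + s.card * d := calc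
    ∑ j ∈ s, μ (A i ∩ A j) ≤ ∑ j ∈ s, ((if i = j then a else 0) + d) := by
        gcongr with j
        split_ifs with hij
        · subst hij
          simp [ha]
        · simpa using hd hij
    _ = a + s.card * d := by
        rw [Finset.sum_add_distrib, Finset.sum_ite_eq, if_pos hi, Finset.sum_const, nsmul_eq_mul]
  simpa only [nsmul_eq_mul] using Finset.sum_le_card_nsmul s _ _ row_le

theorem sq_le_measure_mul_of_pairwise_measure_inter_le [IsFiniteMeasure μ] {A : ℕ → Set α}
    (hA : ∀ i, MeasurableSet (A i)) {U : Set α} (hU : MeasurableSet U) (hAU : ∀ i, A i ⊆ U)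
    {a d : ℝ≥0∞} (ha : ∀ i, μ (A i) = a) (hd : Pairwise fun i j => μ (A i ∩ A j) ≤ d) :
    a ^ 2 ≤ μ U * d := by
  have ha_top : a ≠ ⊤ := ha 0 ▸ measure_ne_top μ _
  have bound (n : ℕ) (hn : 1 ≤ n) : a ^ 2 ≤ μ U * (a * (n : ℝ≥0∞)⁻¹ + d) := by
    have hn0 : (n : ℝ≥0∞) ≠ 0 := by positivity
    have chung_erdos := (sq_sum_measure_le_mul_sum_measure_inter hA hU hAU (Finset.range n)).trans
      (mul_le_mul_right (sum_measure_inter_le_of_pairwise_le ha hd _) _)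
    simp only [ha, Finset.sum_const, Finset.card_range, nsmul_eq_mul] at chung_erdos
    have hsq : (n : ℝ≥0∞) ^ 2 ≠ 0 := pow_ne_zero _ hn0
    refine (ENNReal.mul_le_mul_iff_right hsq (by finiteness)).1 ?_
    calc (n : ℝ≥0∞) ^ 2 * a ^ 2 = (n * a) ^ 2 := (mul_pow _ _ _).symm
      _ ≤ μ U * (n * (a + n * d)) := chung_erdos
      _ = μ U * (n * (a * (n * (n : ℝ≥0∞)⁻¹) + n * d)) := by
          rw [ENNReal.mul_inv_cancel hn0 (by finiteness), mul_one]
      _ = n ^ 2 * (μ U * (a * (n : ℝ≥0∞)⁻¹ + d)) := by ring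
  have lim : Tendsto (fun n : ℕ => μ U * (a * (n : ℝ≥0∞)⁻¹ + d)) atTop (𝓝 (μ U * (a * 0 + d))) :=
    ENNReal.Tendsto.const_mul ((ENNReal.Tendsto.const_mul ENNReal.tendsto_inv_nat_nhds_zero
      (.inr ha_top)).add_const d) (.inr (measure_ne_top μ U))
  rw [mul_zero, zero_add] at lim
  exact ge_of_tendsto lim ((eventually_ge_atTop 1).mono bound)

end SecondMoment

section Neumann

variable {G X : Type*} [Group G] [MulAction G X]

/-- The separation lemma of B. H. Neumann. -/
theorem exists_disjoint_smul_of_infinite_orbit {A : Finset X}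
    (hA : ∀ a ∈ A, (MulAction.orbit G a).Infinite) (B : Finset X) :
    ∃ g : G, Disjoint (g • (A : Set X)) B := by
  by_contra! hmeet
  have exists_carrier : ∀ p : X × X, p.2 ∈ MulAction.orbit G p.1 → ∃ g : G, g • p.1 = p.2 :=
    fun _ => id
  choose! w hw using exists_carrier
  have cover : ⋃ p ∈ A ×ˢ B, w p • (MulAction.stabilizer G p.1 : Set G) = Set.univ := by
    refine Set.eq_univ_of_forall fun g => ?_
    obtain ⟨_, ⟨a, ha, rfl⟩, hb⟩ := Set.not_disjoint_iff.1 (hmeet g)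
    refine Set.mem_biUnion (x := (a, g • a)) (Finset.mem_product.2 ⟨ha, hb⟩) ?_
    rw [mem_leftCoset_iff, SetLike.mem_coe, MulAction.mem_stabilizer_iff, mul_smul,
      inv_smul_eq_iff]
    exact (hw (a, g • a) ⟨g, rfl⟩).symm
  obtain ⟨p, hp, hfin⟩ := Subgroup.exists_finiteIndex_of_leftCoset_cover cover
  apply hfin.index_ne_zero
  rw [MulAction.index_stabilizer, (hA p.1 (Finset.mem_product.1 hp).1).ncard]

theorem exists_seq_pairwise_disjoint_smul {A : Finset X}
    (hA : ∀ a ∈ A, (MulAction.orbit G a).Infinite) :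
    ∃ g : ℕ → G, Pairwise (Disjoint on fun n => g n • (A : Set X)) := by
  classical
  let r (g h : G) : Prop := Disjoint (g • (A : Set X)) (h • (A : Set X))
  have : Std.Symm r := ⟨fun _ _ h => h.symm⟩
  obtain ⟨g, -, hg⟩ := exists_seq_of_forall_finset_exists' (fun _ => True) r fun s _ => by
    obtain ⟨g, hg⟩ := exists_disjoint_smul_of_infinite_orbit hA (s.biUnion fun h => h • A)
    refine ⟨g, trivial, fun h hh => (hg.mono_right ?_).symm⟩
    rw [← Finset.coe_smul_finset]
    exact Finset.coe_subset.2 (Finset.subset_biUnion_of_mem (fun h => h • A) hh)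
  exact ⟨g, hg⟩

theorem exists_seq_pairwise_disjoint_smul_of_isPretransitive [MulAction.IsPretransitive G X]
    [Infinite X] (A : Finset X) :
    ∃ g : ℕ → G, Pairwise (Disjoint on fun n => g n • (A : Set X)) :=
  exists_seq_pairwise_disjoint_smul fun a _ => by
    rw [MulAction.orbit_eq_univ]
    exact Set.infinite_univ

end Neumann

section SubgroupSpace

variable {G : Type*} [Group G]

theorem mem_conjSub {g x : G} {H : Subgroup G} : x ∈ conjSub g H ↔ g⁻¹ * x * g ∈ H :=
  Subgroup.mem_map_equiv

theorem conj_mem_conjSub {x : G} {H : Subgroup G} (hx : x ∈ H) (g : G) :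
    g * x * g⁻¹ ∈ conjSub g H :=
  Subgroup.mem_map_of_mem _ hx

theorem conjSub_injective (g : G) : Injective (conjSub g) :=
  Subgroup.map_injective (MulAut.conj g).injective

theorem continuous_decide_mem (x : G) :
    Continuous fun H : Subgroup G => @decide (x ∈ H) (Classical.dec _) := by
  have hind : Continuous fun (H : Subgroup G) (y : G) => @decide (y ∈ H) (Classical.dec _) :=
    continuous_induced_dom
  exact continuous_pi_iff.1 hind x

theorem isClopen_setOf_mem (x : G) : IsClopen {H : Subgroup G | x ∈ H} := by
  convert (isClopen_discrete {true}).preimage (continuous_decide_mem x)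
  ext H
  simp

theorem measurableSet_setOf_mem (x : G) : MeasurableSet {H : Subgroup G | x ∈ H} :=
  (isClopen_setOf_mem x).isOpen.measurableSet

instance t2Space_subgroup : T2Space (Subgroup G) :=
  .of_injective_continuous (fun H K h => SetLike.ext fun x => by simpa using congrFun h x)
    continuous_induced_dom

theorem continuous_conjSub (g : G) : Continuous (conjSub g) :=
  continuous_induced_rng.2 <| continuous_pi fun x =>
    (continuous_decide_mem (g⁻¹ * x * g)).congr fun H => by simp [mem_conjSub]

theorem IsIRS.measure_conj_mem {θ : Measure (Subgroup G)} (hθ : IsIRS θ) (g x : G) :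
    θ {H | g * x * g⁻¹ ∈ H} = θ {H | x ∈ H} := by
  conv_lhs => rw [← hθ.2 g]
  rw [Measure.map_apply (continuous_conjSub g).measurable (measurableSet_setOf_mem _)]
  simp [mem_conjSub, mul_assoc]

theorem IsIRS.measure_singleton_conjSub {θ : Measure (Subgroup G)} (hθ : IsIRS θ) (g : G)
    (H : Subgroup G) : θ {conjSub g H} = θ {H} := by
  conv_lhs => rw [← hθ.2 g]
  rw [Measure.map_apply (continuous_conjSub g).measurable (measurableSet_singleton _),
    ← Set.image_singleton, (conjSub_injective g).preimage_image]

theorem IsIRS.finite_range_conjSub {θ : Measure (Subgroup G)} (hθ : IsIRS θ) {H : Subgroup G}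
    (hH : θ {H} ≠ 0) : (Set.range fun g => conjSub g H).Finite := by
  have := hθ.1
  refine Set.Finite.subset (Measure.finite_const_le_meas_of_disjoint_iUnion θ
    (pos_iff_ne_zero.2 hH) measurableSet_singleton (fun K L hKL => ?_) (measure_ne_top θ _)) ?_
  · exact Set.disjoint_singleton.2 hKL
  · rintro _ ⟨g, rfl⟩
    exact (hθ.measure_singleton_conjSub g H).ge

end SubgroupSpace

section CosetProb

variable {Δ : Type*} [Group Δ] {Γ : Subgroup Δ} {θ : Measure (Subgroup Γ)} {γ : Δ}

/-- The probability `θ(N_{d⁻¹γd}^Γ)` as a function of the coset `q = dΓ`, computed at the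
representative `q.out`. It depends on that choice unless `θ` is invariant and `γ ∈ core_Δ(Γ)`,
see `cosetProb_mk`. -/
noncomputable def cosetProb (θ : Measure (Subgroup Γ)) (γ : Δ) (q : Δ ⧸ Γ) : ℝ≥0∞ :=
  θ (NpullSet Γ {q.out⁻¹ * γ * q.out})

theorem NpullSet_singleton_coe (x : Γ) : NpullSet Γ {(x : Δ)} = {Λ | x ∈ Λ} := by
  simp [NpullSet]

theorem inv_mul_mul_mem_of_mem_normalCore (hγ : γ ∈ Γ.normalCore) (d : Δ) : d⁻¹ * γ * d ∈ Γ := by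
  simpa using hγ d⁻¹

theorem IsIRS.measure_NpullSet_eq_of_inv_mul_mem (hθ : IsIRS θ) (hγ : γ ∈ Γ.normalCore) {d e : Δ}
    (hde : d⁻¹ * e ∈ Γ) :
    θ (NpullSet Γ {d⁻¹ * γ * d}) = θ (NpullSet Γ {e⁻¹ * γ * e}) := by
  lift d⁻¹ * e to Γ using hde with h hh
  obtain rfl : e = d * h := by rw [hh, mul_inv_cancel_left]
  let x : Γ := ⟨_, inv_mul_mul_mem_of_mem_normalCore hγ (d * h)⟩
  have hconj : d⁻¹ * γ * d = ((h * x * h⁻¹ : Γ) : Δ) := by simp [x, mul_assoc]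
  rw [hconj, NpullSet_singleton_coe, hθ.measure_conj_mem]
  exact congrArg θ (NpullSet_singleton_coe x).symm

theorem cosetProb_mk (hθ : IsIRS θ) (hγ : γ ∈ Γ.normalCore) (d : Δ) :
    cosetProb θ γ d = θ (NpullSet Γ {d⁻¹ * γ * d}) :=
  hθ.measure_NpullSet_eq_of_inv_mul_mem hγ (QuotientGroup.eq.1 (QuotientGroup.out_eq' _))

theorem cosetProb_conj_smul (hθ : IsIRS θ) (hγ : γ ∈ Γ.normalCore) (g : Δ) (q : Δ ⧸ Γ) :
    cosetProb θ (g * γ * g⁻¹) (g • q) = cosetProb θ γ q := by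
  induction q using QuotientGroup.induction_on with
  | H d =>
    rw [MulAction.Quotient.smul_coe, smul_eq_mul, cosetProb_mk hθ hγ,
      cosetProb_mk hθ (Γ.normalCore_normal.conj_mem γ hγ g)]
    congr 3
    group

theorem cosetProb_le_one [IsProbabilityMeasure θ] (γ : Δ) (q : Δ ⧸ Γ) : cosetProb θ γ q ≤ 1 :=
  prob_le_one

theorem mem_kerIRS_iff [IsProbabilityMeasure θ] {x : Γ} :
    x ∈ kerIRS Γ θ ↔ θ {Λ | x ∈ Λ} = 1 := by
  refine ⟨fun hx => ?_, fun hx => Subgroup.subset_closure hx⟩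
  have one_iff_ae (y : Γ) : θ {Λ | y ∈ Λ} = 1 ↔ ∀ᵐ Λ ∂θ, y ∈ Λ :=
    (mem_ae_iff_prob_eq_one (measurableSet_setOf_mem y)).symm
  rw [one_iff_ae]
  induction hx using Subgroup.closure_induction with
  | mem y hy => exact (one_iff_ae y).1 hy
  | one => exact .of_forall fun Λ => Λ.one_mem
  | mul y z _ _ hy hz => filter_upwards [hy, hz] with Λ using mul_mem
  | inv y _ hy => filter_upwards [hy] with Λ using inv_mem

theorem coreKer_le_normalCore : coreKer Γ θ ≤ Γ.normalCore :=
  Subgroup.normalCore_mono (Subgroup.map_subtype_le _)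

theorem mem_coreKer_iff (hθ : IsIRS θ) (hγ : γ ∈ Γ.normalCore) :
    γ ∈ coreKer Γ θ ↔ ∀ q, cosetProb θ γ q = 1 := by
  have := hθ.1
  have mem_map_iff (d : Δ) :
      d⁻¹ * γ * d ∈ (kerIRS Γ θ).map Γ.subtype ↔ θ (NpullSet Γ {d⁻¹ * γ * d}) = 1 := by
    lift d⁻¹ * γ * d to Γ using inv_mul_mul_mem_of_mem_normalCore hγ d with x
    rw [NpullSet_singleton_coe, ← mem_kerIRS_iff]
    simp
  calc γ ∈ coreKer Γ θ ↔ ∀ d : Δ, d * γ * d⁻¹ ∈ (kerIRS Γ θ).map Γ.subtype := Iff.rfl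
    _ ↔ ∀ d : Δ, d⁻¹ * γ * d ∈ (kerIRS Γ θ).map Γ.subtype := by
        rw [← (Equiv.inv Δ).forall_congr_right]; simp
    _ ↔ ∀ q, cosetProb θ γ q = 1 := by
        simp only [mem_map_iff, QuotientGroup.forall_mk, cosetProb_mk hθ hγ]

end CosetProb

theorem IsLeftTransversal.isComplement {Δ : Type*} [Group Δ] {Γ : Subgroup Δ} {T : Set Δ}
    (hT : IsLeftTransversal Γ T) : Subgroup.IsComplement T Γ := by
  refine Subgroup.isComplement_iff_existsUnique_inv_mul_mem.2 fun d => ?_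
  obtain ⟨t, ⟨ht, hdt⟩, hunique⟩ := hT d
  have inv_mul_mem_comm (s : Δ) : s⁻¹ * d ∈ Γ ↔ d⁻¹ * s ∈ Γ := by
    rw [← inv_mem_iff, mul_inv_rev, inv_inv]
  exact ⟨⟨t, ht⟩, (inv_mul_mem_comm t).2 hdt,
    fun s hs => Subtype.ext (hunique s ⟨s.2, (inv_mul_mem_comm s).1 hs⟩)⟩

namespace CindSpec

variable {Δ : Type*} [Group Δ] {Γ : Subgroup Δ} {T : Set Δ} {θ : Measure (Subgroup Γ)}
  {ν : Measure (Subgroup Δ)} {γ : Δ}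

theorem measure_mem_eq_tprod (hc : CindSpec Γ T θ ν) (hγ : γ ∈ Γ.normalCore) :
    ν {H | γ ∈ H} = ∏' t : T, θ (NpullSet Γ {(t : Δ)⁻¹ * γ * t}) := by
  simpa [NSet] using (hc {γ}).2 (by simpa using hγ)

theorem measure_mem_eq_zero (hc : CindSpec Γ T θ ν) (hγ : γ ∉ Γ.normalCore) :
    ν {H | γ ∈ H} = 0 := by
  simpa [NSet] using (hc {γ}).1 (by simpa using hγ)

theorem measure_mem_ne_zero_iff [IsProbabilityMeasure θ] (hc : CindSpec Γ T θ ν) :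
    ν {H | γ ∈ H} ≠ 0 ↔ γ ∈ Γ.normalCore ∧
      ∑' t : T, (1 - θ (NpullSet Γ {(t : Δ)⁻¹ * γ * t})) < ⊤ ∧
      ∀ t : T, 0 < θ (NpullSet Γ {(t : Δ)⁻¹ * γ * t}) := by
  by_cases hγ : γ ∈ Γ.normalCore
  · rw [← pos_iff_ne_zero, hc.measure_mem_eq_tprod hγ,
      tprod_pos_iff_tsum_one_sub_lt_top fun _ => prob_le_one]
    simp only [hγ, true_and]
  · simp [hγ, hc.measure_mem_eq_zero hγ]

theorem hasProd_cosetProb (hc : CindSpec Γ T θ ν) (hT : IsLeftTransversal Γ T) (hθ : IsIRS θ)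
    (hγ : γ ∈ Γ.normalCore) : HasProd (cosetProb θ γ) (ν {H | γ ∈ H}) := by
  have := hθ.1
  let e := hT.isComplement.leftQuotientEquiv
  have apply_rep (q : Δ ⧸ Γ) : θ (NpullSet Γ {(e q : Δ)⁻¹ * γ * e q}) = cosetProb θ γ q := by
    rw [← cosetProb_mk hθ hγ]
    exact congrArg _ (hT.isComplement.quotientGroupMk_leftQuotientEquiv q)
  rw [hc.measure_mem_eq_tprod hγ, ← e.tprod_eq]
  simp only [apply_rep]
  exact (ENNReal.multipliable_of_le_one (cosetProb_le_one γ)).hasProd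

/-- In the product over `T`, keep only the factors at the cosets `g i • q` with `q ∈ K`, which are
distinct: each is at most the factor of the single element `g i * γ * (g i)⁻¹`, which is that of
`γ` at `q`. -/
theorem measure_forall_conj_mem_le_pow {ι : Type*} (hc : CindSpec Γ T θ ν)
    (hT : IsLeftTransversal Γ T) (hθ : IsIRS θ) (hγ : γ ∈ Γ.normalCore) (s : Finset ι) {g : ι → Δ}
    {K : Finset (Δ ⧸ Γ)} (hgK : (s : Set ι).PairwiseDisjoint fun i => g i • (K : Set (Δ ⧸ Γ))) :
    ν {H | ∀ i ∈ s, g i * γ * (g i)⁻¹ ∈ H} ≤ (∏ q ∈ K, cosetProb θ γ q) ^ s.card := by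
  classical
  have := hθ.1
  let e := hT.isComplement.leftQuotientEquiv
  let F : Finset Δ := s.image fun i => g i * γ * (g i)⁻¹
  have conj_mem_core (i : ι) : g i * γ * (g i)⁻¹ ∈ Γ.normalCore :=
    Γ.normalCore_normal.conj_mem γ hγ (g i)
  have hF : (F : Set Δ) ⊆ Γ.normalCore := by
    simpa [F, Set.subset_def] using fun i _ => conj_mem_core i
  have smul_injOn : Set.InjOn (fun p : ι × Δ ⧸ Γ => e (g p.1 • p.2)) (s ×ˢ K : Finset _) := by
    refine e.injective.comp_injOn ?_
    rw [Finset.coe_product]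
    exact (Set.pairwiseDisjoint_image_right_iff fun i _ => MulAction.injective (g i)).1 hgK
  have factor_le (p : ι × Δ ⧸ Γ) (hp : p.1 ∈ s) :
      θ (NpullSet Γ ((fun d => (e (g p.1 • p.2) : Δ)⁻¹ * d * e (g p.1 • p.2)) '' F))
        ≤ cosetProb θ γ p.2 := by
    have mk_rep : ((e (g p.1 • p.2) : Δ) : Δ ⧸ Γ) = g p.1 • p.2 :=
      hT.isComplement.quotientGroupMk_leftQuotientEquiv _
    have cosetProb_eq : cosetProb θ γ p.2 = θ (NpullSet Γ
        {(e (g p.1 • p.2) : Δ)⁻¹ * (g p.1 * γ * (g p.1)⁻¹) * e (g p.1 • p.2)}) := by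
      rw [← cosetProb_mk hθ (conj_mem_core p.1), mk_rep, cosetProb_conj_smul hθ hγ]
    rw [cosetProb_eq]
    refine measure_mono fun Λ hΛ x hx => hΛ x ?_
    exact ⟨_, Finset.mem_coe.2 (Finset.mem_image_of_mem _ hp), (Set.mem_singleton_iff.1 hx).symm⟩
  calc ν {H | ∀ i ∈ s, g i * γ * (g i)⁻¹ ∈ H} = ν (NSet F) := by simp [NSet, F, Set.subset_def]
    _ = ∏' t : T, θ (NpullSet Γ ((fun d => (t : Δ)⁻¹ * d * t) '' F)) := (hc F).2 hF
    _ ≤ _ := tprod_le_prod_comp_of_injOn (fun _ => prob_le_one) smul_injOn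
    _ ≤ ∏ p ∈ s ×ˢ K, cosetProb θ γ p.2 :=
        Finset.prod_le_prod' fun p hp => factor_le p (Finset.mem_product.1 hp).1
    _ = (∏ q ∈ K, cosetProb θ γ q) ^ s.card := by
        simp only [Finset.prod_product, Finset.prod_const]

theorem ae_mem_of_mem_coreKer (hc : CindSpec Γ T θ ν) (hθ : IsIRS θ) [IsProbabilityMeasure ν]
    (hγ : γ ∈ coreKer Γ θ) : ∀ᵐ H ∂ν, γ ∈ H := by
  have hcore := coreKer_le_normalCore hγ
  refine (mem_ae_iff_prob_eq_one (measurableSet_setOf_mem γ)).2 ?_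
  have factor_eq_one (t : T) : θ (NpullSet Γ {(t : Δ)⁻¹ * γ * t}) = 1 := by
    rw [← cosetProb_mk hθ hcore, (mem_coreKer_iff hθ hcore).1 hγ]
  simp [hc.measure_mem_eq_tprod hcore, factor_eq_one]

theorem coreKer_le_of_measure_singleton_ne_zero (hc : CindSpec Γ T θ ν) (hθ : IsIRS θ)
    [IsProbabilityMeasure ν] {H : Subgroup Δ} (hH : ν {H} ≠ 0) : coreKer Γ θ ≤ H := by
  intro γ hγ
  by_contra hγH
  exact hH (measure_mono_null (by simpa using hγH) (ae_iff.1 (hc.ae_mem_of_mem_coreKer hθ hγ)))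

variable [Infinite (Δ ⧸ Γ)]

/-- An atom has finitely many conjugates, so infinitely many of the conjugates by elements moving
`q` to distinct cosets coincide; that one contains all the corresponding conjugates of `γ`. -/
theorem measure_singleton_le_cosetProb_pow (hc : CindSpec Γ T θ ν)
    (hT : IsLeftTransversal Γ T) (hθ : IsIRS θ) (hν : IsIRS ν) {H : Subgroup Δ} (hH : ν {H} ≠ 0)
    (hγ : γ ∈ Γ.normalCore) (hγH : γ ∈ H) (q : Δ ⧸ Γ) (n : ℕ) :
    ν {H} ≤ cosetProb θ γ q ^ n := by
  obtain ⟨g, hg⟩ :=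
    exists_seq_pairwise_disjoint_smul_of_isPretransitive (G := Δ) ({q} : Finset (Δ ⧸ Γ))
  have : Finite (Set.range fun g => conjSub g H) := hν.finite_range_conjSub hH
  obtain ⟨⟨H', hH'⟩, hinf⟩ :=
    Finite.exists_infinite_fiber fun i : ℕ => Set.rangeFactorization (fun g => conjSub g H) (g i)
  obtain ⟨s, hs, hcard⟩ := (Set.infinite_coe_iff.1 hinf).exists_subset_card_eq n
  have conj_eq (i : ℕ) (hi : i ∈ s) : conjSub (g i) H = H' := congrArg Subtype.val (hs hi)
  obtain ⟨h, hh⟩ := hH'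
  calc ν {H} = ν {H'} := by rw [← hh]; exact (hν.measure_singleton_conjSub h H).symm
    _ ≤ ν {L | ∀ i ∈ s, g i * γ * (g i)⁻¹ ∈ L} := by
        refine measure_mono (Set.singleton_subset_iff.2 fun i hi => ?_)
        rw [← conj_eq i hi]
        exact conj_mem_conjSub hγH (g i)
    _ ≤ (∏ r ∈ {q}, cosetProb θ γ r) ^ s.card :=
        hc.measure_forall_conj_mem_le_pow hT hθ hγ s fun i _ j _ hij => hg hij
    _ = cosetProb θ γ q ^ n := by rw [Finset.prod_singleton, hcard]

theorem le_coreKer_of_measure_singleton_ne_zero (hc : CindSpec Γ T θ ν)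
    (hT : IsLeftTransversal Γ T) (hθ : IsIRS θ) (hν : IsIRS ν) {H : Subgroup Δ} (hH : ν {H} ≠ 0) :
    H ≤ coreKer Γ θ := by
  have := hθ.1
  intro γ hγH
  have hγ : γ ∈ Γ.normalCore := by
    by_contra hγ
    exact hH (measure_mono_null (by simpa using hγH) (hc.measure_mem_eq_zero hγ))
  refine (mem_coreKer_iff hθ hγ).2 fun q => ?_
  by_contra hq
  have hlim := ENNReal.tendsto_pow_atTop_nhds_zero_of_lt_one ((cosetProb_le_one γ q).lt_of_ne hq)
  have hle := ge_of_tendsto' hlim (hc.measure_singleton_le_cosetProb_pow hT hθ hν hH hγ hγH q)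
  exact hH (le_zero_iff.1 hle)

theorem exists_seq_measure_inter_le (hc : CindSpec Γ T θ ν) (hT : IsLeftTransversal Γ T)
    (hθ : IsIRS θ) (hγ : γ ∈ Γ.normalCore) {d : ℝ≥0∞} (hd : ν {H | γ ∈ H} ^ 2 < d) :
    ∃ g : ℕ → Δ, Pairwise fun i j =>
      ν ({H | g i * γ * (g i)⁻¹ ∈ H} ∩ {H | g j * γ * (g j)⁻¹ ∈ H}) ≤ d := by
  have lim_sq := ENNReal.Tendsto.pow (n := 2) (hc.hasProd_cosetProb hT hθ hγ)
  obtain ⟨K, hK⟩ := (lim_sq.eventually_le_const hd).exists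
  obtain ⟨g, hg⟩ := exists_seq_pairwise_disjoint_smul_of_isPretransitive (G := Δ) K
  refine ⟨g, fun i j hij => le_trans ?_ hK⟩
  have hle := hc.measure_forall_conj_mem_le_pow hT hθ hγ {i, j} fun i _ j _ hij => hg hij
  simpa [Finset.card_pair hij, Set.ofPred_and] using hle

theorem ae_exists_conj_mem (hc : CindSpec Γ T θ ν) (hT : IsLeftTransversal Γ T) (hθ : IsIRS θ)
    (hν : IsIRS ν) (hpos : ν {H | γ ∈ H} ≠ 0) : ∀ᵐ H ∂ν, ∃ g : Δ, g * γ * g⁻¹ ∈ H := by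
  have := hν.1
  have hγ : γ ∈ Γ.normalCore := by
    by_contra hγ
    exact hpos (hc.measure_mem_eq_zero hγ)
  set a := ν {H | γ ∈ H}
  let U : Set (Subgroup Δ) := {H | ∃ g : Δ, g * γ * g⁻¹ ∈ H}
  have hU : MeasurableSet U := by
    simp only [U, Set.ofPred_exists]
    exact (isOpen_iUnion fun g => (isClopen_setOf_mem _).isOpen).measurableSet
  have sq_le_mul (d : ℝ≥0∞) (hd : a ^ 2 < d) : a ^ 2 ≤ ν U * d := by
    obtain ⟨g, hg⟩ := hc.exists_seq_measure_inter_le hT hθ hγ hd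
    exact sq_le_measure_mul_of_pairwise_measure_inter_le (fun _ => measurableSet_setOf_mem _) hU
      (fun i H hH => ⟨g i, hH⟩) (fun i => hν.measure_conj_mem (g i) γ) hg
  have div_le : a ^ 2 / ν U ≤ a ^ 2 := le_of_forall_gt_imp_ge_of_dense fun d hd =>
    ENNReal.div_le_of_le_mul' (sq_le_mul d hd)
  have ha : a ^ 2 ≠ 0 := pow_ne_zero 2 hpos
  have ha_top : a ^ 2 ≠ ⊤ := by finiteness
  have le_mul : a ^ 2 * 1 ≤ a ^ 2 * ν U := by
    rwa [mul_one, ← ENNReal.div_le_iff_le_mul (.inr ha_top) (.inr ha)]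
  exact (mem_ae_iff_prob_eq_one hU).2
    (prob_le_one.antisymm ((ENNReal.mul_le_mul_iff_right ha ha_top).1 le_mul))

theorem measure_coreKer_eq_zero_iff [Countable Δ] (hc : CindSpec Γ T θ ν)
    (hT : IsLeftTransversal Γ T) (hθ : IsIRS θ) (hν : IsIRS ν) :
    ν {coreKer Γ θ} = 0 ↔ ∃ γ ∉ coreKer Γ θ, ν {H | γ ∈ H} ≠ 0 := by
  have := hν.1
  constructor
  · contrapose!
    intro hnull
    have ae_mem_iff (γ : Δ) : ∀ᵐ H ∂ν, γ ∈ H ↔ γ ∈ coreKer Γ θ := by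
      by_cases hγ : γ ∈ coreKer Γ θ
      · simpa only [hγ, iff_true] using hc.ae_mem_of_mem_coreKer hθ hγ
      · simpa only [hγ, iff_false, ae_iff, not_not] using hnull γ hγ
    have ae_eq : ∀ᵐ H ∂ν, H = coreKer Γ θ := (ae_all_iff.2 ae_mem_iff).mono fun H => SetLike.ext
    have measure_eq_one := (mem_ae_iff_prob_eq_one (measurableSet_singleton _)).1 ae_eq
    rw [measure_eq_one]
    exact one_ne_zero
  · rintro ⟨γ, hγ, hpos⟩
    refine measure_mono_null (Set.singleton_subset_iff.2 ?_)
      (ae_iff.1 (hc.ae_exists_conj_mem hT hθ hν hpos))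
    rintro ⟨g, hg⟩
    have normal_coreKer : (coreKer Γ θ).Normal := Subgroup.normalCore_normal _
    exact hγ (by simpa [mul_assoc] using normal_coreKer.conj_mem _ hg g⁻¹)

theorem nonAtomicMeasure_iff_measure_coreKer_eq_zero (hc : CindSpec Γ T θ ν)
    (hT : IsLeftTransversal Γ T) (hθ : IsIRS θ) (hν : IsIRS ν) :
    NonAtomicMeasure ν ↔ ν {coreKer Γ θ} = 0 := by
  have := hν.1
  refine ⟨fun h => h _, fun hnull H => ?_⟩
  by_contra hH
  have hle := hc.le_coreKer_of_measure_singleton_ne_zero hT hθ hν hH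
  have hge := hc.coreKer_le_of_measure_singleton_ne_zero hθ hH
  exact hH (hle.antisymm hge ▸ hnull)

end CindSpec

/-- Characterization of non-atomicity of the co-induced IRS: for `[Δ : Γ] = ∞` and `T` a
transversal for `Δ/Γ`, `CIND_Γ^Δ(θ)` is non-atomic iff there is
`γ ∈ core_Δ(Γ) \ core_Δ(ker(θ))` with `∑_{t∈T} (1 - θ(N_{t⁻¹γt}^Γ)) < ∞` and
`θ(N_{t⁻¹γt}^Γ) > 0` for all `t ∈ T`. -/
theorem coinduced_IRS_nonatomic_iff {Δ : Type*} [Group Δ] [Countable Δ] (Γ : Subgroup Δ)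
    (hinf : Infinite (Δ ⧸ Γ))
    (θ : Measure (Subgroup ↥Γ)) (hθ : IsIRS θ)
    (T : Set Δ) (hT : IsLeftTransversal Γ T)
    (ν : Measure (Subgroup Δ)) (hν : IsIRS ν) (hc : CindSpec Γ T θ ν) :
    NonAtomicMeasure ν ↔
      ∃ γ : Δ, γ ∈ Γ.normalCore ∧ γ ∉ coreKer Γ θ ∧
        (∑' t : T, (1 - θ (NpullSet Γ {(t : Δ)⁻¹ * γ * (t : Δ)}))) < ⊤ ∧
        ∀ t : T, 0 < θ (NpullSet Γ {(t : Δ)⁻¹ * γ * (t : Δ)}) := by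
  have := hθ.1
  rw [hc.nonAtomicMeasure_iff_measure_coreKer_eq_zero hT hθ hν,
    hc.measure_coreKer_eq_zero_iff hT hθ hν]
  refine exists_congr fun γ => ?_
  rw [hc.measure_mem_ne_zero_iff]
  exact and_left_comm

end IRSPaper
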